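/- (Exact variance of the time-averaged estimating function under stationarity.) Assume μ_b is invariant for the behavior state chain, i.e., μ_b.bind K_b = μ_b. Then for every T ≥ 0, Var_{P_b}[ Σ_{t=0}^T φ(s_t, a_t, r_t, s_{t+1}) ] = (T+1) · E_D[ φ(s,a,r,s')² ] = (T+1) · E_D[ w(s)² η(s,a)² (r + γ v(s') − q(s,a))² ]. -/

import Mathlib

open MeasureTheory ProbabilityTheory
open scoped ENNReal

noncomputable section

variable {S A : Type*} [MeasurableSpace S] [MeasurableSpace A]

/-- `t`-fold composition of a Markov kernel with itself. -/
def kpow {α : Type*} [MeasurableSpace α] (K : Kernel α α) : ℕ → Kernel α α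
  | 0 => Kernel.id
  | n + 1 => K ∘ₖ kpow K n

/-- The state-transition kernel induced by a policy `π`. -/
def stateKernel (P : Kernel (S × A) S) (π : Kernel S A) [IsSFiniteKernel π] :
    Kernel S S :=
  P ∘ₖ (Kernel.id ×ₖ π)

/-- The discounted average visitation measure. -/
def dgamma (γ : ℝ) (μe : Measure S) (Ke : Kernel S S) : Measure S :=
  ENNReal.ofReal (1 - γ) •
    Measure.sum fun t : ℕ => ENNReal.ofReal γ ^ t • μe.bind fun s => kpow Ke t s

/-- The data distribution `D`. -/
def dataLaw (P : Kernel (S × A) S) (R : Kernel (S × A) ℝ) (πb : Kernel S A)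
    (μb : Measure S) : Measure (S × A × ℝ × S) :=
  μb.bind fun s => (πb s).bind fun a => (R (s, a)).bind fun r =>
    (P (s, a)).map fun s' => (s, a, r, s')

/-- The law of the initial triple `(s₀, a₀, r₀)` under the behavior policy. -/
def initLaw (R : Kernel (S × A) ℝ) (πb : Kernel S A) (μb : Measure S) :
    Measure (S × A × ℝ) :=
  μb.bind fun s => (πb s).bind fun a => (R (s, a)).map fun r => (s, a, r)

/-- The one-step transition of the behavior trajectory. -/
def stepLaw (P : Kernel (S × A) S) (R : Kernel (S × A) ℝ) (πb : Kernel S A)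
    (x : S × A × ℝ) : Measure (S × A × ℝ) :=
  (P (x.1, x.2.1)).bind fun s' => (πb s').bind fun a' =>
    (R (s', a')).map fun r' => (s', a', r')

/-- The law of the length-`(n+1)` prefix of the behavior trajectory. -/
def finLaw (P : Kernel (S × A) S) (R : Kernel (S × A) ℝ) (πb : Kernel S A)
    (μb : Measure S) : (n : ℕ) → Measure (Fin (n + 1) → S × A × ℝ)
  | 0 => (initLaw R πb μb).map fun x => fun _ => x
  | n + 1 => (finLaw P R πb μb n).bind fun path =>
      (stepLaw P R πb (path (Fin.last n))).map (Fin.snoc path)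

/-- The transition observed at time `t` along a trajectory. -/
def Xt (t : ℕ) (ω : ℕ → S × A × ℝ) : S × A × ℝ × S :=
  ((ω t).1, (ω t).2.1, (ω t).2.2, (ω (t + 1)).1)

/-!
Given the history up to the state `s_t`, the rest `(a_t, r_t, s_{t+1})` of the `t`-th transition is
drawn from the kernel `πb ⊗ₖ (R ×ₖ P)` at `s_t`. The Bellman equation says exactly that `φ` has
mean zero under this kernel, so the `φ(s_t, a_t, r_t, s_{t+1})` are martingale differences, hence
uncorrelated. Stationarity gives every transition the law `D`, so each term has variance `E_D[φ²]`.
-/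

section

variable {Ω α β δ : Type*} [MeasurableSpace Ω] [MeasurableSpace α] [MeasurableSpace β]
  [MeasurableSpace δ]

theorem map_compProd_eq_bind (μ : Measure α) [SFinite μ] (κ : Kernel α β) [IsSFiniteKernel κ]
    {f : α × β → δ} (hf : Measurable f) :
    (μ ⊗ₘ κ).map f = μ.bind fun a => (κ a).map fun b => f (a, b) := by
  rw [Measure.compProd_eq_comp_prod, Measure.map_comp _ _ hf]
  congr 1 with a : 1
  rw [Kernel.map_apply _ hf, Kernel.prod_apply, Kernel.id_apply, Measure.dirac_prod,
    Measure.map_map hf measurable_prodMk_left, Function.comp_def]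

theorem bind_bind_map_eq_compProd (μ : Measure α) [SFinite μ] (κ : Kernel α β)
    [IsSFiniteKernel κ] (η : Kernel (α × β) δ) [IsSFiniteKernel η] :
    (μ.bind fun a => (κ a).bind fun b => (η (a, b)).map fun c => (a, b, c)) =
      μ ⊗ₘ (κ ⊗ₖ η) := by
  rw [← Measure.map_id (μ := μ ⊗ₘ (κ ⊗ₖ η)), map_compProd_eq_bind _ _ measurable_id]
  congr 1 with a : 1
  rw [Kernel.compProd_apply_eq_compProd_sectR]
  exact (map_compProd_eq_bind (κ a) (η.sectR a) measurable_prodMk_left).symm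

theorem comap_compProd {α' : Type*} [MeasurableSpace α'] (κ : Kernel α β) [IsSFiniteKernel κ]
    (η : Kernel (α × β) δ) [IsSFiniteKernel η] {f : α' → α} (hf : Measurable f) :
    (κ ⊗ₖ η).comap f hf =
      κ.comap f hf ⊗ₖ η.comap (Prod.map f id) (hf.prodMap measurable_id) := by
  ext x s hs
  simp only [Kernel.comap_apply, Kernel.compProd_apply hs, Prod.map_apply, id_eq]

theorem compProd_prodMkRight (κ : Kernel α β) [IsSFiniteKernel κ] (η : Kernel α δ)
    [IsSFiniteKernel η] : κ ⊗ₖ Kernel.prodMkRight β η = κ ×ₖ η := by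
  ext x : 1
  rw [Kernel.compProd_apply_eq_compProd_sectR, Kernel.prod_apply, ← Measure.compProd_const]
  rfl

theorem snd_compProd_eq_comp (κ : Kernel α β) [IsSFiniteKernel κ] (η : Kernel (α × β) δ)
    [IsSFiniteKernel η] : (κ ⊗ₖ η).snd = η ∘ₖ (Kernel.id ×ₖ κ) := by
  ext x s hs
  rw [Kernel.snd_apply' _ _ hs, Kernel.compProd_apply (measurable_snd hs),
    Kernel.comp_apply' _ _ _ hs, Kernel.lintegral_id_prod (η.measurable_coe hs)]
  rfl

theorem integral_compProd_eq_zero {μ : Measure α} [SFinite μ] {κ : Kernel α β}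
    [IsSFiniteKernel κ] {f : α × β → ℝ} (hf : Integrable f (μ ⊗ₘ κ))
    (hzero : ∀ᵐ x ∂μ, ∫ y, f (x, y) ∂(κ x) = 0) :
    ∫ p, f p ∂(μ ⊗ₘ κ) = 0 := by
  rw [Measure.integral_compProd hf]
  exact integral_eq_zero_of_ae hzero

theorem ae_integral_compProd_eq_zero {μ : Measure α} [SFinite μ] {κ : Kernel α β}
    [IsSFiniteKernel κ] {η : Kernel (α × β) δ} [IsSFiniteKernel η] {f : α × β × δ → ℝ}
    (hf : Integrable f (μ ⊗ₘ (κ ⊗ₖ η)))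
    (hzero : ∀ a b, ∫ c, f (a, b, c) ∂(η (a, b)) = 0) :
    ∀ᵐ a ∂μ, ∫ z, f (a, z) ∂((κ ⊗ₖ η) a) = 0 := by
  filter_upwards [((Measure.integrable_compProd_iff hf.aestronglyMeasurable).1 hf).1] with a ha
  rw [ProbabilityTheory.integral_compProd ha]
  simp only [hzero, integral_zero]

theorem hasCondDistrib_prodMk {μ : Measure Ω} {X : Ω → α} {Y : Ω → β} {Z : Ω → δ}
    {κ : Kernel α β} {η : Kernel (α × β) δ} (hY : HasCondDistrib Y X κ μ)
    (hZ : HasCondDistrib Z (fun ω => (X ω, Y ω)) η μ) :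
    HasCondDistrib (fun ω => (Y ω, Z ω)) X (κ ⊗ₖ η) μ where
  aemeasurable := by
    have := hY.aemeasurable_fst
    have := hY.aemeasurable_snd
    have := hZ.aemeasurable_snd
    fun_prop
  map_eq := by
    rw [← Measure.compProd_assoc', ← hY.map_eq, ← hZ.map_eq,
      AEMeasurable.map_map_of_aemeasurable (by fun_prop) hZ.aemeasurable]
    rfl

theorem integral_mul_eq_zero_of_hasCondDistrib {μ : Measure Ω} [SFinite μ] {X : Ω → α} {Y : Ω → β}
    {κ : Kernel α β} [IsMarkovKernel κ] (hXY : HasCondDistrib Y X κ μ) {f : α → ℝ}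
    {g : α × β → ℝ} (hf : MemLp f 2 (μ.map X)) (hg : MemLp g 2 (μ.map X ⊗ₘ κ))
    (hzero : ∀ᵐ x ∂μ.map X, ∫ y, g (x, y) ∂(κ x) = 0) :
    ∫ ω, f (X ω) * g (X ω, Y ω) ∂μ = 0 := by
  have hfst : MeasurePreserving Prod.fst (μ.map X ⊗ₘ κ) (μ.map X) :=
    ⟨measurable_fst, Measure.fst_compProd _ _⟩
  have hfg : Integrable (fun p : α × β => f p.1 * g p) (μ.map X ⊗ₘ κ) :=
    (hf.comp_measurePreserving hfst).integrable_mul hg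
  calc ∫ ω, f (X ω) * g (X ω, Y ω) ∂μ
      = ∫ p, f p.1 * g p ∂(μ.map X ⊗ₘ κ) := hXY.integral_comp hfg.aestronglyMeasurable
    _ = ∫ x, f x * ∫ y, g (x, y) ∂(κ x) ∂(μ.map X) := by
      simp only [Measure.integral_compProd hfg, integral_const_mul]
    _ = 0 := integral_eq_zero_of_ae <| by
      filter_upwards [hzero] with x hx
      simp [hx]

theorem covariance_eq_zero_of_hasCondDistrib {μ : Measure Ω} [IsProbabilityMeasure μ] {X : Ω → α}
    {Y : Ω → β} {κ : Kernel α β} [IsMarkovKernel κ] (hXY : HasCondDistrib Y X κ μ) {f : α → ℝ}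
    {g : α × β → ℝ} (hf : MemLp f 2 (μ.map X)) (hg : MemLp g 2 (μ.map X ⊗ₘ κ))
    (hzero : ∀ᵐ x ∂μ.map X, ∫ y, g (x, y) ∂(κ x) = 0) :
    cov[fun ω => f (X ω), fun ω => g (X ω, Y ω); μ] = 0 := by
  have hfX : MemLp (fun ω => f (X ω)) 2 μ := hf.comp_of_map hXY.aemeasurable_fst
  have hgXY : MemLp (fun ω => g (X ω, Y ω)) 2 μ :=
    (hXY.map_eq ▸ hg).comp_of_map hXY.aemeasurable
  have := Measure.isProbabilityMeasure_map (μ := μ) hXY.aemeasurable_fst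
  have hmean : ∫ ω, g (X ω, Y ω) ∂μ = 0 := by
    simpa using integral_mul_eq_zero_of_hasCondDistrib hXY (memLp_const 1) hg hzero
  rw [covariance_eq_sub hfX hgXY, hmean, mul_zero, sub_zero]
  exact integral_mul_eq_zero_of_hasCondDistrib hXY hf hg hzero

theorem variance_fun_sum_of_pairwise_covariance_eq_zero {ι : Type*} {μ : Measure Ω}
    [IsFiniteMeasure μ] {X : ι → Ω → ℝ} {s : Finset ι} (hX : ∀ i ∈ s, MemLp (X i) 2 μ)
    (hcov : (s : Set ι).Pairwise fun i j => cov[X i, X j; μ] = 0) :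
    Var[fun ω => ∑ i ∈ s, X i ω; μ] = ∑ i ∈ s, Var[X i; μ] := by
  rw [variance_fun_sum' hX]
  refine Finset.sum_congr rfl fun i hi => ?_
  rw [← covariance_self (hX i hi).aemeasurable]
  exact Finset.sum_eq_single_of_mem i hi fun j hj hji => hcov hi hj hji.symm

theorem exists_abs_mul_uncurry_le {ι κ : Type*} {f : ι → ℝ} {g : ι → κ → ℝ}
    (hf : ∃ C : ℝ, ∀ i, 0 ≤ f i ∧ f i ≤ C) (hg : ∃ C : ℝ, ∀ i j, 0 ≤ g i j ∧ g i j ≤ C) :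
    ∃ C : ℝ, ∀ p : ι × κ, |f p.1 * g p.1 p.2| ≤ C := by
  obtain ⟨Cf, hCf⟩ := hf
  obtain ⟨Cg, hCg⟩ := hg
  refine ⟨Cf * Cg, fun p => ?_⟩
  rw [abs_of_nonneg (mul_nonneg (hCf _).1 (hCg _ _).1)]
  exact mul_le_mul (hCf _).2 (hCg _ _).2 (hCg _ _).1 ((hCf p.1).1.trans (hCf _).2)

theorem exists_abs_integral_kernel_le {κ : Kernel α β} [IsMarkovKernel κ] {f : α → β → ℝ}
    (hf : ∃ C : ℝ, ∀ a b, |f a b| ≤ C) : ∃ C : ℝ, ∀ a, |∫ b, f a b ∂(κ a)| ≤ C := by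
  obtain ⟨C, hC⟩ := hf
  refine ⟨C, fun a => ?_⟩
  simpa using norm_integral_le_of_norm_le_const (μ := κ a) (f := f a) (.of_forall (hC a))

theorem ae_abs_le_of_measure_compl_Icc_eq_zero {μ : Measure ℝ} {B : ℝ}
    (h : μ (Set.Icc 0 B)ᶜ = 0) : ∀ᵐ r ∂μ, |r| ≤ B := by
  filter_upwards [show ∀ᵐ r ∂μ, r ∈ Set.Icc 0 B from h] with r hr
  exact (abs_of_nonneg hr.1).trans_le hr.2

theorem measurable_fin_snoc (n : ℕ) :
    Measurable fun p : (Fin n → α) × α => (Fin.snoc p.1 p.2 : Fin (n + 1) → α) := by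
  refine measurable_pi_lambda _ fun i => ?_
  cases i using Fin.lastCases with
  | last => simpa only [Fin.snoc_last] using measurable_snd
  | cast i => simpa only [Fin.snoc_castSucc] using measurable_fst.eval

end

theorem initLaw_eq_compProd (R : Kernel (S × A) ℝ) [IsSFiniteKernel R] (πb : Kernel S A)
    [IsSFiniteKernel πb] (μb : Measure S) [SFinite μb] :
    initLaw R πb μb = μb ⊗ₘ (πb ⊗ₖ R) :=
  bind_bind_map_eq_compProd μb πb R

theorem stepLaw_eq_compProd (P : Kernel (S × A) S) [IsSFiniteKernel P] (R : Kernel (S × A) ℝ)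
    [IsSFiniteKernel R] (πb : Kernel S A) [IsSFiniteKernel πb] (x : S × A × ℝ) :
    stepLaw P R πb x = P (x.1, x.2.1) ⊗ₘ (πb ⊗ₖ R) :=
  bind_bind_map_eq_compProd _ πb R

theorem dataLaw_eq_compProd (P : Kernel (S × A) S) [IsSFiniteKernel P] (R : Kernel (S × A) ℝ)
    [IsSFiniteKernel R] (πb : Kernel S A) [IsSFiniteKernel πb] (μb : Measure S) [SFinite μb] :
    dataLaw P R πb μb = μb ⊗ₘ (πb ⊗ₖ (R ×ₖ P)) := by
  rw [← bind_bind_map_eq_compProd, dataLaw]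
  congr! with s a
  rw [Kernel.prod_apply, ← Measure.compProd_const,
    map_compProd_eq_bind (R (s, a)) (Kernel.const ℝ (P (s, a))) (f := fun y => (s, a, y))
      (by fun_prop)]
  rfl

instance isFiniteMeasure_dataLaw (P : Kernel (S × A) S) [IsFiniteKernel P]
    (R : Kernel (S × A) ℝ) [IsFiniteKernel R] (πb : Kernel S A) [IsFiniteKernel πb]
    (μb : Measure S) [IsFiniteMeasure μb] : IsFiniteMeasure (dataLaw P R πb μb) := by
  rw [dataLaw_eq_compProd]
  infer_instance

instance isMarkovKernel_stateKernel (P : Kernel (S × A) S) [IsMarkovKernel P] (π : Kernel S A)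
    [IsMarkovKernel π] : IsMarkovKernel (stateKernel P π) := by
  unfold stateKernel
  infer_instance

/-- `Pb` is the law of the behavior trajectory: its prefixes have the laws `finLaw`. By uniqueness
of projective limits this determines the Ionescu–Tulcea measure. -/
def IsTrajectoryLaw (P : Kernel (S × A) S) (R : Kernel (S × A) ℝ) (πb : Kernel S A)
    (μb : Measure S) (Pb : Measure (ℕ → S × A × ℝ)) : Prop :=
  ∀ n : ℕ, Pb.map (fun ω => fun i : Fin (n + 1) => ω i) = finLaw P R πb μb n

/-- What has been observed on arrival in the state `s_n`: the triples at times `< n`, and `s_n`. -/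
def history (n : ℕ) (ω : ℕ → S × A × ℝ) : (Fin n → S × A × ℝ) × S :=
  (fun i => ω i, (ω n).1)

@[fun_prop]
theorem measurable_history (n : ℕ) : Measurable (history (S := S) (A := A) n) := by
  unfold history
  fun_prop

@[fun_prop]
theorem measurable_Xt (n : ℕ) : Measurable (Xt (S := S) (A := A) n) := by
  unfold Xt
  fun_prop

theorem exists_measurable_Xt_eq_comp_history {i n : ℕ} (hin : i < n) :
    ∃ e : (Fin n → S × A × ℝ) × S → S × A × ℝ × S, Measurable e ∧ Xt i = e ∘ history n := by
  refine ⟨fun p => ((p.1 ⟨i, hin⟩).1, (p.1 ⟨i, hin⟩).2.1, (p.1 ⟨i, hin⟩).2.2,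
    if h : i + 1 < n then (p.1 ⟨i + 1, h⟩).1 else p.2), ?_, ?_⟩
  · split <;> fun_prop
  · ext ω : 1
    by_cases h : i + 1 < n
    · simp [Xt, history, h]
    · obtain rfl : n = i + 1 := by omega
      simp [Xt, history]

namespace IsTrajectoryLaw

variable {P : Kernel (S × A) S} {R : Kernel (S × A) ℝ} {πb : Kernel S A} {μb : Measure S}
  {Pb : Measure (ℕ → S × A × ℝ)}

theorem hasLaw_zero [IsSFiniteKernel R] [IsSFiniteKernel πb] [SFinite μb]
    (h : IsTrajectoryLaw P R πb μb Pb) : HasLaw (fun ω => ω 0) (μb ⊗ₘ (πb ⊗ₖ R)) Pb where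
  aemeasurable := (measurable_pi_apply 0).aemeasurable
  map_eq := by
    have h0 := congrArg (Measure.map fun p => p 0) (h 0)
    rw [finLaw, Measure.map_map (by fun_prop) (by fun_prop),
      Measure.map_map (by fun_prop) (by fun_prop)] at h0
    rw [← initLaw_eq_compProd, ← Measure.map_id (μ := initLaw R πb μb)]
    exact h0

variable [IsMarkovKernel R] [IsMarkovKernel πb]

theorem hasLaw_state_zero [SFinite μb] (h : IsTrajectoryLaw P R πb μb Pb) :
    HasLaw (fun ω => (ω 0).1) μb Pb :=
  HasLaw.fun_comp ⟨measurable_fst.aemeasurable, Measure.fst_compProd μb (πb ⊗ₖ R)⟩ h.hasLaw_zero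

variable [IsMarkovKernel P]

theorem hasCondDistrib_succ [SFinite Pb] (h : IsTrajectoryLaw P R πb μb Pb) (n : ℕ) :
    HasCondDistrib (fun ω => ω (n + 1)) (fun ω (i : Fin (n + 1)) => ω i)
      (P.comap (fun p : Fin (n + 1) → S × A × ℝ => ((p (Fin.last n)).1, (p (Fin.last n)).2.1))
          (by fun_prop) ⊗ₖ Kernel.prodMkLeft _ (πb ⊗ₖ R)) Pb where
  map_eq := by
    set κ := P.comap
      (fun p : Fin (n + 1) → S × A × ℝ => ((p (Fin.last n)).1, (p (Fin.last n)).2.1))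
      (by fun_prop) ⊗ₖ Kernel.prodMkLeft _ (πb ⊗ₖ R) with hκ
    have hstep (p : Fin (n + 1) → S × A × ℝ) : stepLaw P R πb (p (Fin.last n)) = κ p := by
      rw [stepLaw_eq_compProd, hκ, Kernel.compProd_apply_eq_compProd_sectR]
      rfl
    have hsnoc : Pb.map (fun ω (i : Fin (n + 2)) => ω i) =
        (Pb.map (fun ω (i : Fin (n + 1)) => ω i) ⊗ₘ κ).map fun p => Fin.snoc p.1 p.2 := by
      rw [map_compProd_eq_bind _ _ (measurable_fin_snoc (n + 1)), h n, h (n + 1), finLaw]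
      simp only [hstep]
    let unsnoc (p : Fin (n + 2) → S × A × ℝ) : (Fin (n + 1) → S × A × ℝ) × (S × A × ℝ) :=
      (fun i => p i.castSucc, p (Fin.last (n + 1)))
    have hunsnoc : Measurable unsnoc := by fun_prop
    have hleft : unsnoc ∘ (fun p => Fin.snoc p.1 p.2) = id := by
      ext p : 1
      simp [unsnoc]
    have := congrArg (Measure.map unsnoc) hsnoc
    rw [Measure.map_map hunsnoc (by fun_prop), Measure.map_map hunsnoc (measurable_fin_snoc _),
      hleft, Measure.map_id] at this
    exact this

theorem hasCondDistrib_action_reward [SFinite μb] [SFinite Pb] (h : IsTrajectoryLaw P R πb μb Pb)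
    (n : ℕ) : HasCondDistrib (fun ω => (ω n).2) (history n) (Kernel.prodMkLeft _ (πb ⊗ₖ R)) Pb := by
  cases n with
  | zero =>
    have h0 : HasCondDistrib (fun ω => (ω 0).2) (fun ω : ℕ → S × A × ℝ => (ω 0).1)
        (πb ⊗ₖ R) Pb := by
      rw [HasCondDistrib, h.hasLaw_state_zero.map_eq]
      exact h.hasLaw_zero
    have : history (S := S) (A := A) 0 = (fun s => (default, s)) ∘ fun ω => (ω 0).1 := by
      ext ω : 1
      exact Prod.ext (Subsingleton.elim _ _) rfl
    rw [this]
    exact HasCondDistrib.comp_right (hf := by fun_prop) h0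
  | succ n => exact (h.hasCondDistrib_succ n).of_compProd

theorem hasCondDistrib_action [SFinite μb] [SFinite Pb] (h : IsTrajectoryLaw P R πb μb Pb)
    (n : ℕ) : HasCondDistrib (fun ω => (ω n).2.1) (history n) (Kernel.prodMkLeft _ πb) Pb := by
  have := (h.hasCondDistrib_action_reward n).fst
  rwa [Kernel.fst_prodMkLeft, Kernel.fst_compProd] at this

theorem hasCondDistrib_reward [SFinite μb] [SFinite Pb] (h : IsTrajectoryLaw P R πb μb Pb)
    (n : ℕ) : HasCondDistrib (fun ω => (ω n).2.2) (fun ω => (history n ω, (ω n).2.1))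
      (R.comap (fun p => (p.1.2, p.2)) (by fun_prop)) Pb := by
  have := h.hasCondDistrib_action_reward n
  rw [Kernel.prodMkLeft, comap_compProd] at this
  exact this.of_compProd

theorem hasCondDistrib_nextState [SFinite Pb] (h : IsTrajectoryLaw P R πb μb Pb) (n : ℕ) :
    HasCondDistrib (fun ω => (ω (n + 1)).1)
      (fun ω => ((history n ω, (ω n).2.1), (ω n).2.2))
      (P.comap (fun p => (p.1.1.2, p.1.2)) (by fun_prop)) Pb := by
  let past (p : Fin (n + 1) → S × A × ℝ) : (((Fin n → S × A × ℝ) × S) × A) × ℝ :=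
    (((fun i => p i.castSucc, (p (Fin.last n)).1), (p (Fin.last n)).2.1), (p (Fin.last n)).2.2)
  have hpast : Measurable past := by fun_prop
  have hnext : HasCondDistrib (fun ω => (ω (n + 1)).1) (fun ω (i : Fin (n + 1)) => ω i)
      ((P.comap (fun p => (p.1.1.2, p.1.2)) (by fun_prop)).comap past hpast) Pb := by
    have := (h.hasCondDistrib_succ n).fst
    rwa [Kernel.fst_compProd] at this
  exact hnext.comp_right

theorem hasCondDistrib_transition [SFinite μb] [SFinite Pb] (h : IsTrajectoryLaw P R πb μb Pb)
    (n : ℕ) : HasCondDistrib (fun ω => (Xt n ω).2) (history n)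
      (Kernel.prodMkLeft _ (πb ⊗ₖ (R ×ₖ P))) Pb := by
  have hRP := hasCondDistrib_prodMk (h.hasCondDistrib_reward n) (h.hasCondDistrib_nextState n)
  have := hasCondDistrib_prodMk (h.hasCondDistrib_action n) hRP
  rw [Kernel.prodMkLeft, comap_compProd, ← compProd_prodMkRight, comap_compProd]
  exact this

theorem hasCondDistrib_nextState_state [SFinite μb] [SFinite Pb]
    (h : IsTrajectoryLaw P R πb μb Pb) (n : ℕ) :
    HasCondDistrib (fun ω => (ω (n + 1)).1) (fun ω => (ω n).1) (stateKernel P πb) Pb := by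
  have haction : HasCondDistrib (fun ω => (ω n).2.1) (fun ω => (ω n).1) πb Pb :=
    HasCondDistrib.comp_right (hf := measurable_snd) (h.hasCondDistrib_action n)
  have hstate : HasCondDistrib (fun ω => (ω (n + 1)).1) (fun ω => ((ω n).1, (ω n).2.1)) P Pb :=
    HasCondDistrib.comp_right (hf := by fun_prop) (h.hasCondDistrib_nextState n)
  rw [stateKernel, ← snd_compProd_eq_comp]
  exact (hasCondDistrib_prodMk haction hstate).snd

theorem hasLaw_state [SFinite μb] [SFinite Pb] (h : IsTrajectoryLaw P R πb μb Pb)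
    (hstat : μb.bind (fun s => stateKernel P πb s) = μb) (n : ℕ) :
    HasLaw (fun ω => (ω n).1) μb Pb := by
  induction n with
  | zero => exact h.hasLaw_state_zero
  | succ n ih =>
    have hpair := ih.prodMk_of_hasCondDistrib (h.hasCondDistrib_nextState_state n)
    have hsnd : HasLaw Prod.snd μb (μb ⊗ₘ stateKernel P πb) :=
      ⟨by fun_prop, (Measure.snd_compProd μb (stateKernel P πb)).trans hstat⟩
    exact hsnd.fun_comp hpair

theorem hasLaw_Xt [SFinite μb] [SFinite Pb] (h : IsTrajectoryLaw P R πb μb Pb)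
    (hstat : μb.bind (fun s => stateKernel P πb s) = μb) (n : ℕ) :
    HasLaw (Xt n) (dataLaw P R πb μb) Pb := by
  rw [dataLaw_eq_compProd]
  exact (h.hasLaw_state hstat n).prodMk_of_hasCondDistrib
    (HasCondDistrib.comp_right (hf := measurable_snd) (h.hasCondDistrib_transition n))

theorem covariance_comp_Xt_eq_zero [SFinite μb] [IsProbabilityMeasure Pb]
    (h : IsTrajectoryLaw P R πb μb Pb) (hstat : μb.bind (fun s => stateKernel P πb s) = μb)
    {φ : S × A × ℝ × S → ℝ} (hφ : MemLp φ 2 (dataLaw P R πb μb))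
    (hcent : ∀ᵐ s ∂μb, ∫ z, φ (s, z) ∂((πb ⊗ₖ (R ×ₖ P)) s) = 0) {i n : ℕ} (hin : i < n) :
    cov[fun ω => φ (Xt i ω), fun ω => φ (Xt n ω); Pb] = 0 := by
  obtain ⟨e, he, hXt⟩ := exists_measurable_Xt_eq_comp_history (S := S) (A := A) hin
  have htrans := h.hasCondDistrib_transition n
  have hpast : MeasurePreserving e (Pb.map (history n)) (dataLaw P R πb μb) := by
    refine ⟨he, ?_⟩
    rw [Measure.map_map he (measurable_history n), ← hXt, (h.hasLaw_Xt hstat i).map_eq]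
  have hcur : MeasurePreserving
      (fun p : ((Fin n → S × A × ℝ) × S) × (A × ℝ × S) => (p.1.2, p.2))
      (Pb.map (history n) ⊗ₘ Kernel.prodMkLeft _ (πb ⊗ₖ (R ×ₖ P))) (dataLaw P R πb μb) := by
    refine ⟨by fun_prop, ?_⟩
    rw [← htrans.map_eq, Measure.map_map (by fun_prop) (by fun_prop)]
    exact (h.hasLaw_Xt hstat n).map_eq
  have hzero : ∀ᵐ x ∂Pb.map (history n), ∫ z, φ (x.2, z) ∂((πb ⊗ₖ (R ×ₖ P)) x.2) = 0 := by
    refine ae_of_ae_map (p := fun s => ∫ z, φ (s, z) ∂((πb ⊗ₖ (R ×ₖ P)) s) = 0)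
      measurable_snd.aemeasurable ?_
    rw [Measure.map_map measurable_snd (measurable_history n)]
    exact (h.hasLaw_state hstat n).map_eq.symm ▸ hcent
  rw [hXt]
  exact covariance_eq_zero_of_hasCondDistrib htrans (hφ.comp_measurePreserving hpast)
    (hφ.comp_measurePreserving hcur) hzero

theorem variance_sum_comp_Xt [IsFiniteMeasure μb] [IsProbabilityMeasure Pb]
    (h : IsTrajectoryLaw P R πb μb Pb) (hstat : μb.bind (fun s => stateKernel P πb s) = μb)
    {φ : S × A × ℝ × S → ℝ} (hφ : MemLp φ 2 (dataLaw P R πb μb))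
    (hcent : ∀ᵐ s ∂μb, ∫ z, φ (s, z) ∂((πb ⊗ₖ (R ×ₖ P)) s) = 0) (T : ℕ) :
    Var[fun ω => ∑ t ∈ Finset.range (T + 1), φ (Xt t ω); Pb] =
      (T + 1 : ℝ) * ∫ x, φ x ^ 2 ∂(dataLaw P R πb μb) := by
  have hlaw := h.hasLaw_Xt hstat
  have hXt (t : ℕ) : MemLp (fun ω => φ (Xt t ω)) 2 Pb :=
    hφ.comp_measurePreserving ⟨by fun_prop, (hlaw t).map_eq⟩
  have hcov : (Finset.range (T + 1) : Set ℕ).Pairwise fun i j =>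
      cov[fun ω => φ (Xt i ω), fun ω => φ (Xt j ω); Pb] = 0 := fun i _ j _ hij => by
    rcases hij.lt_or_gt with hij | hji
    · exact h.covariance_comp_Xt_eq_zero hstat hφ hcent hij
    · rw [covariance_comm]
      exact h.covariance_comp_Xt_eq_zero hstat hφ hcent hji
  have hvar (t : ℕ) : Var[fun ω => φ (Xt t ω); Pb] = ∫ x, φ x ^ 2 ∂(dataLaw P R πb μb) := by
    have hmean : ∫ ω, φ (Xt t ω) ∂Pb = 0 := by
      refine ((hlaw t).integral_comp hφ.aestronglyMeasurable).trans ?_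
      rw [dataLaw_eq_compProd] at hφ ⊢
      exact integral_compProd_eq_zero (hφ.integrable one_le_two) hcent
    rw [variance_of_integral_eq_zero (hXt t).aemeasurable hmean]
    exact (hlaw t).integral_comp (hφ.aestronglyMeasurable.pow 2)
  rw [variance_fun_sum_of_pairwise_covariance_eq_zero (fun t _ => hXt t) hcov]
  simp [hvar]

end IsTrajectoryLaw

/-- The temporal-difference error `r + γ v(s') - q(s, a)`, weighted by `ρ(s, a)`. -/
def weightedTDError (ρ : S × A → ℝ) (γ : ℝ) (v : S → ℝ) (q : S × A → ℝ)
    (x : S × A × ℝ × S) : ℝ :=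
  ρ (x.1, x.2.1) * (x.2.2.1 + γ * v x.2.2.2 - q (x.1, x.2.1))

@[fun_prop]
theorem measurable_weightedTDError {ρ : S × A → ℝ} (hρ : Measurable ρ) (γ : ℝ) {v : S → ℝ}
    (hv : Measurable v) {q : S × A → ℝ} (hq : Measurable q) :
    Measurable (weightedTDError ρ γ v q) := by
  unfold weightedTDError
  fun_prop

theorem integral_weightedTDError_eq_zero {P : Kernel (S × A) S} [IsMarkovKernel P]
    {R : Kernel (S × A) ℝ} [IsMarkovKernel R] (ρ : S × A → ℝ) {γ : ℝ} {v : S → ℝ} {q : S × A → ℝ}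
    {s : S} {a : A} (hr : Integrable id (R (s, a))) (hv : Integrable v (P (s, a)))
    (hbellman : q (s, a) = ∫ r, r ∂(R (s, a)) + γ * ∫ s', v s' ∂(P (s, a))) :
    ∫ y, weightedTDError ρ γ v q (s, a, y) ∂((R ×ₖ P) (s, a)) = 0 := by
  have hfst : Integrable (fun y : ℝ × S => y.1) ((R ×ₖ P) (s, a)) := by
    rw [Kernel.prod_apply]
    exact hr.comp_fst _
  have hsnd : Integrable (fun y : ℝ × S => γ * v y.2) ((R ×ₖ P) (s, a)) := by
    rw [Kernel.prod_apply]
    exact (hv.comp_snd _).const_mul γ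
  have hsum : Integrable (fun y : ℝ × S => y.1 + γ * v y.2) ((R ×ₖ P) (s, a)) := hfst.add hsnd
  have hmean : ∫ y, (y.1 + γ * v y.2) ∂((R ×ₖ P) (s, a)) = q (s, a) := by
    rw [integral_add hfst hsnd, integral_const_mul, Kernel.prod_apply,
      integral_fun_fst (fun r : ℝ => r), integral_fun_snd v, hbellman]
    simp
  simp only [weightedTDError]
  rw [integral_const_mul, integral_sub hsum (integrable_const _)]
  simp [hmean]

theorem ae_reward_mem_dataLaw (P : Kernel (S × A) S) [IsSFiniteKernel P] {R : Kernel (S × A) ℝ}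
    [IsSFiniteKernel R] (πb : Kernel S A) [IsSFiniteKernel πb] (μb : Measure S) [SFinite μb]
    {B : Set ℝ} (hB : MeasurableSet B) (hR : ∀ p, ∀ᵐ r ∂(R p), r ∈ B) :
    ∀ᵐ x ∂(dataLaw P R πb μb), x.2.2.1 ∈ B := by
  rw [dataLaw_eq_compProd]
  refine Measure.ae_compProd_of_ae_ae (by measurability) (.of_forall fun s => ?_)
  refine Kernel.ae_compProd_of_ae_ae (by measurability) (.of_forall fun a => ?_)
  rw [Kernel.prod_apply]
  exact Measure.quasiMeasurePreserving_fst.ae (hR (s, a))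

theorem memLp_weightedTDError {P : Kernel (S × A) S} [IsFiniteKernel P] {R : Kernel (S × A) ℝ}
    [IsFiniteKernel R] {πb : Kernel S A} [IsFiniteKernel πb] {μb : Measure S} [IsFiniteMeasure μb]
    {ρ q : S × A → ℝ} {v : S → ℝ} {B Cρ Cq Cv : ℝ} (hR : ∀ p, ∀ᵐ r ∂(R p), |r| ≤ B)
    (hρ : Measurable ρ) (hρC : ∀ p, |ρ p| ≤ Cρ) (γ : ℝ) (hv : Measurable v)
    (hvC : ∀ s, |v s| ≤ Cv) (hq : Measurable q) (hqC : ∀ p, |q p| ≤ Cq) (p : ℝ≥0∞) :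
    MemLp (weightedTDError ρ γ v q) p (dataLaw P R πb μb) := by
  have hB : MeasurableSet {r : ℝ | |r| ≤ B} := measurableSet_le (by fun_prop) measurable_const
  refine .of_bound (by fun_prop) (Cρ * (B + |γ| * Cv + Cq)) ?_
  filter_upwards [ae_reward_mem_dataLaw P πb μb hB hR] with ⟨s, a, r, s'⟩ hr
  have htd : |r + γ * v s' - q (s, a)| ≤ B + |γ| * Cv + Cq :=
    calc |r + γ * v s' - q (s, a)| ≤ |r| + |γ| * |v s'| + |q (s, a)| := by
          rw [← abs_mul]
          exact (abs_sub _ _).trans (add_le_add_left (abs_add_le _ _) _)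
      _ ≤ B + |γ| * Cv + Cq :=
          add_le_add (add_le_add hr (mul_le_mul_of_nonneg_left (hvC s') (abs_nonneg γ)))
            (hqC (s, a))
  rw [weightedTDError, Real.norm_eq_abs, abs_mul]
  exact mul_le_mul (hρC _) htd (abs_nonneg _) ((abs_nonneg _).trans (hρC (s, a)))

theorem exact_variance_under_stationarity_general (P : Kernel (S × A) S) [IsMarkovKernel P]
    (R : Kernel (S × A) ℝ) [IsMarkovKernel R] {B : ℝ} (hR : ∀ p, ∀ᵐ r ∂(R p), |r| ≤ B)
    (γ : ℝ) (πb : Kernel S A) [IsMarkovKernel πb] (μb : Measure S) [IsFiniteMeasure μb]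
    (hstat : μb.bind (fun s => stateKernel P πb s) = μb)
    {ρ : S × A → ℝ} (hρ : Measurable ρ) (hρ_bdd : ∃ C : ℝ, ∀ p, |ρ p| ≤ C)
    {v : S → ℝ} (hv : Measurable v) (hv_bdd : ∃ C : ℝ, ∀ s, |v s| ≤ C)
    {q : S × A → ℝ} (hq : Measurable q) (hq_bdd : ∃ C : ℝ, ∀ p, |q p| ≤ C)
    (hq_bellman : ∀ p, q p = (∫ r, r ∂(R p)) + γ * ∫ s', v s' ∂(P p))
    (Pb : Measure (ℕ → S × A × ℝ)) [IsProbabilityMeasure Pb]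
    (hPb : IsTrajectoryLaw P R πb μb Pb) (T : ℕ) :
    Var[fun ω => ∑ t ∈ Finset.range (T + 1), weightedTDError ρ γ v q (Xt t ω); Pb] =
      (T + 1 : ℝ) * ∫ x, weightedTDError ρ γ v q x ^ 2 ∂(dataLaw P R πb μb) := by
  obtain ⟨Cρ, hρC⟩ := hρ_bdd
  obtain ⟨Cv, hvC⟩ := hv_bdd
  obtain ⟨Cq, hqC⟩ := hq_bdd
  have hmem := memLp_weightedTDError (P := P) (πb := πb) (μb := μb) hR hρ hρC γ hv hvC hq hqC 2
  have hint : Integrable (weightedTDError ρ γ v q) (dataLaw P R πb μb) :=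
    hmem.integrable one_le_two
  rw [dataLaw_eq_compProd] at hint
  refine hPb.variance_sum_comp_Xt hstat hmem (ae_integral_compProd_eq_zero hint fun s a => ?_) T
  have hr : Integrable id (R (s, a)) := .of_bound aestronglyMeasurable_id B (hR (s, a))
  have hvP : Integrable v (P (s, a)) := .of_bound hv.aestronglyMeasurable Cv (.of_forall hvC)
  exact integral_weightedTDError_eq_zero ρ hr hvP (hq_bellman (s, a))

/-- exact variance of the time-averaged estimating function under
stationarity: if `μ_b` is invariant for the behavior state chain then, for every `T`,
`Var_{P_b}[Σ_{t=0}^T φ(s_t,a_t,r_t,s_{t+1})] = (T+1)·E_D[φ²]`. -/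
theorem exact_variance_under_stationarity
    (P : Kernel (S × A) S) [IsMarkovKernel P]
    (Rmax : ℝ) (hRmax : 0 < Rmax)
    (R : Kernel (S × A) ℝ) [IsMarkovKernel R]
    (hR : ∀ p : S × A, R p (Set.Icc (0 : ℝ) Rmax)ᶜ = 0)
    (γ : ℝ) (hγ0 : 0 < γ) (hγ1 : γ < 1)
    (πe πb : Kernel S A) [IsMarkovKernel πe] [IsMarkovKernel πb]
    (μe μb : Measure S) [IsProbabilityMeasure μe] [IsProbabilityMeasure μb]
    -- stationarity: μ_b is invariant for the behavior state chain
    (hstat : μb.bind (fun s => stateKernel P πb s) = μb)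
    -- the policy density ratio η, bounded
    (η : S → A → ℝ) (hη_meas : Measurable (Function.uncurry η))
    (hη_bdd : ∃ C : ℝ, ∀ s a, 0 ≤ η s a ∧ η s a ≤ C)
    (hη : ∀ᵐ s ∂μb, πe s = (πb s).withDensity fun a => ENNReal.ofReal (η s a))
    -- the stationary density ratio w, a bounded measurable density of d_γ wrt μ_b
    (w : S → ℝ) (hw_meas : Measurable w)
    (hw_bdd : ∃ C : ℝ, ∀ s, 0 ≤ w s ∧ w s ≤ C)
    (hw : dgamma γ μe (stateKernel P πe) =
      μb.withDensity fun s => ENNReal.ofReal (w s))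
    -- the q-function: bounded, measurable and satisfying the Bellman evaluation equation
    (q : S → A → ℝ) (hq_meas : Measurable (Function.uncurry q))
    (hq_bdd : ∃ C : ℝ, ∀ s a, |q s a| ≤ C)
    (hq_bellman : ∀ s a, q s a =
      (∫ r, r ∂(R (s, a))) + γ * ∫ s', (∫ a', q s' a' ∂(πe s')) ∂(P (s, a)))
    -- the efficient estimating function φ
    (φ : S × A × ℝ × S → ℝ)
    (hφ : ∀ x : S × A × ℝ × S, φ x =
      w x.1 * η x.1 x.2.1 *
        (x.2.2.1 + γ * (∫ a, q x.2.2.2 a ∂(πe x.2.2.2)) - q x.1 x.2.1))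
    -- the trajectory law P_b, characterized by its finite-dimensional prefixes
    (Pb : Measure (ℕ → S × A × ℝ)) [IsProbabilityMeasure Pb]
    (hPb : ∀ n : ℕ, Pb.map (fun ω => fun i : Fin (n + 1) => ω i) = finLaw P R πb μb n) :
    ∀ T : ℕ,
      variance (fun ω => ∑ t ∈ Finset.range (T + 1), φ (Xt t ω)) Pb =
        (T + 1 : ℝ) * ∫ x, (φ x) ^ 2 ∂(dataLaw P R πb μb) := by
  obtain rfl : φ = weightedTDError (fun p => w p.1 * η p.1 p.2) γ
      (fun s => ∫ a, q s a ∂(πe s)) (Function.uncurry q) := funext hφ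
  exact exact_variance_under_stationarity_general P R
    (fun p => ae_abs_le_of_measure_compl_Icc_eq_zero (hR p)) γ πb μb hstat
    ((hw_meas.comp measurable_fst).mul hη_meas) (exists_abs_mul_uncurry_le hw_bdd hη_bdd)
    hq_meas.stronglyMeasurable.integral_kernel_prod_right'.measurable
    (exists_abs_integral_kernel_le hq_bdd) hq_meas (hq_bdd.imp fun _ h p => h p.1 p.2)
    (fun p => hq_bellman p.1 p.2) Pb hPb

end
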